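/- Let 𝒮 = {(1,0),(1,−1),(−2,1),(−2,0)} ⊆ ℤ². Then for all i, j, n ∈ ℕ: if there is no m ∈ ℕ with n = i + 3j + 3m, then q(i,j;n) = 0; and if n = i + 3j + 3m for some m ∈ ℕ, then q(i,j;n) · m! · (m+j+1)! · (2m+i+2j+3)! · (2m+i+3j+4)! = (i+1)·(j+1)·(i+3j+4)·((i+2j+2)(i+2j+3) + m(2i+3j+4))·n!·(n+3)!. -/

import Mathlib

/-!
A walk of length `n + 1` ending at a point `p` of the quadrant is a walk of length `n` ending at
`p - s` followed by a step `s`, so the numbers of walks satisfy a linear recurrence in `n`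
(`card_succ`), which determines them. After the shift `(a, b) = (i + 1, j + 1)` the quadrant is
bordered by the lines `a = 0` and `b = 0`. The predecessors of a point `(a, b)` of the quadrant are
`(a - 1, b)`, `(a - 1, b + 1)`, `(a + 2, b - 1)` and `(a + 2, b)`, which never lie beyond these lines,
and on them the closed form vanishes thanks to its factor `a * b`. Each step raises
`n - i - 3 * j` by `0` or `3`, which gives the vanishing statement (`W_eq_zero`).

It remains that the closed form satisfies the recurrence (`W_formula`). In terms of
`m = (n - i - 3 * j) / 3`, the four predecessors have parameters `m`, `m - 1`, `m`, `m - 1`, and after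
division by the common factorials the recurrence becomes a polynomial identity in `a`, `b`, `m`. For
`m = 0` the two terms with parameter `m - 1` are zero on both sides.
-/

open Finset

/-- Partial sum of the first `m` steps of `f`. -/
def partialSum {n : ℕ} (f : Fin n → ℤ × ℤ) (m : ℕ) : ℤ × ℤ :=
  ∑ k ∈ Finset.univ.filter (fun k : Fin n => (k : ℕ) < m), f k

/-- Number of `n`-step quadrant walks from `(0,0)` to `(i,j)` with steps in `S`. -/
noncomputable def quadWalks (S : Finset (ℤ × ℤ)) (i j : ℕ) (n : ℕ) : ℕ :=
  Nat.card {f : Fin n → ℤ × ℤ //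
    (∀ k, f k ∈ S) ∧
    (∀ m : ℕ, m ≤ n → 0 ≤ (partialSum f m).1 ∧ 0 ≤ (partialSum f m).2) ∧
    partialSum f n = ((i : ℤ), (j : ℤ))}

/-- The step set `{(1,0),(1,−1),(−2,1),(−2,0)}`. -/
def S18 : Finset (ℤ × ℤ) := {(1, 0), (1, -1), (-2, 1), (-2, 0)}

/-- `f` is a quadrant walk with steps in `S18` ending at `p`. -/
def IsWalk (n : ℕ) (p : ℤ × ℤ) (f : Fin n → ℤ × ℤ) : Prop :=
  (∀ k, f k ∈ S18) ∧
    (∀ m : ℕ, m ≤ n → 0 ≤ (partialSum f m).1 ∧ 0 ≤ (partialSum f m).2) ∧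
    partialSum f n = p

lemma partialSum_init {n : ℕ} (f : Fin (n + 1) → ℤ × ℤ) {m : ℕ} (hm : m ≤ n) :
    partialSum f m = partialSum (Fin.init f) m := by
  simp only [partialSum, Finset.sum_filter, Fin.sum_univ_castSucc, Fin.init]
  simp [hm]

lemma partialSum_succ {n : ℕ} (f : Fin (n + 1) → ℤ × ℤ) :
    partialSum f (n + 1) = partialSum (Fin.init f) n + f (Fin.last n) := by
  simp [partialSum, Finset.sum_filter, Fin.sum_univ_castSucc, Fin.init]

lemma isWalk_succ {n : ℕ} {p : ℤ × ℤ} {f : Fin (n + 1) → ℤ × ℤ} :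
    IsWalk (n + 1) p f ↔
      (0 ≤ p.1 ∧ 0 ≤ p.2) ∧ f (Fin.last n) ∈ S18 ∧
        IsWalk n (p - f (Fin.last n)) (Fin.init f) := by
  constructor
  · rintro ⟨hS, hpos, hend⟩
    refine ⟨?_, hS _, fun k => hS _, fun m hm => ?_, ?_⟩
    · have := hpos (n + 1) le_rfl
      rwa [hend] at this
    · rw [← partialSum_init f hm]
      exact hpos m (by omega)
    · rw [← hend, partialSum_succ]
      abel
  · rintro ⟨hp, hl, hS, hpos, hend⟩
    have he : partialSum f (n + 1) = p := by
      rw [partialSum_succ, hend]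
      abel
    refine ⟨fun k => ?_, fun m hm => ?_, he⟩
    · refine Fin.lastCases hl (fun k => hS k) k
    · rcases Nat.lt_or_ge n m with h | h
      · obtain rfl : m = n + 1 := by omega
        rwa [he]
      · rw [partialSum_init f h]
        exact hpos m h

instance (n : ℕ) (p : ℤ × ℤ) : Finite {f // IsWalk n p f} :=
  Finite.of_injective (β := Fin n → S18) (fun f k => ⟨f.1 k, f.2.1 k⟩) fun f g h => by
    ext1
    funext k
    exact congrArg Subtype.val (congrFun h k)

/-- Removing the last step. -/
def walkEquiv (n : ℕ) (p : ℤ × ℤ) (hp : 0 ≤ p.1 ∧ 0 ≤ p.2) :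
    {f // IsWalk (n + 1) p f} ≃ Σ s : S18, {f // IsWalk n (p - s) f} where
  toFun f := ⟨⟨f.1 (Fin.last n), (isWalk_succ.1 f.2).2.1⟩, Fin.init f.1, (isWalk_succ.1 f.2).2.2⟩
  invFun x := ⟨Fin.snoc (α := fun _ => ℤ × ℤ) x.2.1 x.1.1, isWalk_succ.2 ⟨hp, by
    rw [Fin.snoc_last, Fin.init_snoc]
    exact ⟨x.1.2, x.2.2⟩⟩⟩
  left_inv f := by
    ext1
    exact Fin.snoc_init_self f.1
  right_inv x := Sigma.subtype_ext (Subtype.ext (by simp)) (by simp)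

lemma card_succ (n : ℕ) (p : ℤ × ℤ) (hp : 0 ≤ p.1 ∧ 0 ≤ p.2) :
    Nat.card {f // IsWalk (n + 1) p f} = ∑ s ∈ S18, Nat.card {f // IsWalk n (p - s) f} := by
  rw [Nat.card_congr (walkEquiv n p hp), Nat.card_sigma,
    Finset.sum_coe_sort S18 fun s => Nat.card {f // IsWalk n (p - s) f}]

lemma card_zero (p : ℤ × ℤ) : Nat.card {f // IsWalk 0 p f} = if p = 0 then 1 else 0 := by
  split_ifs with h
  · subst h
    have : Nonempty {f // IsWalk 0 0 f} := ⟨Fin.elim0, by simp [IsWalk, partialSum]⟩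
    exact Nat.card_unique
  · have : IsEmpty {f // IsWalk 0 p f} := ⟨fun f => h (by simpa [partialSum] using f.2.2.2.symm)⟩
    exact Nat.card_of_isEmpty

/-- The number of `n`-step walks ending at `(a - 1, b - 1)`, defined by its recurrence. With this
shift the lines `a = 0` and `b = 0` just outside the quadrant are part of the domain. -/
def W : ℕ → ℕ → ℕ → ℕ
  | 0, a, b => if a = 1 ∧ b = 1 then 1 else 0
  | _ + 1, 0, _ => 0
  | _ + 1, _ + 1, 0 => 0
  | n + 1, a + 1, b + 1 => W n a (b + 1) + W n a (b + 2) + W n (a + 3) b + W n (a + 3) (b + 1)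

lemma card_eq_W (n : ℕ) : ∀ a b : ℕ,
    Nat.card {f // IsWalk n ((a : ℤ) - 1, (b : ℤ) - 1) f} = W n a b := by
  have hneg (n : ℕ) (p : ℤ × ℤ) (hp : ¬ (0 ≤ p.1 ∧ 0 ≤ p.2)) :
      Nat.card {f // IsWalk (n + 1) p f} = 0 := by
    have : IsEmpty {f // IsWalk (n + 1) p f} := ⟨fun f => hp (isWalk_succ.1 f.2).1⟩
    exact Nat.card_of_isEmpty
  induction n with
  | zero =>
    intro a b
    rw [card_zero, W]
    congr 1
    rw [Prod.mk_eq_zero, eq_iff_iff]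
    omega
  | succ n ih =>
    intro a b
    match a, b with
    | 0, b => rw [W, hneg]; simp
    | a + 1, 0 => rw [W, hneg]; simp
    | a + 1, b + 1 =>
      rw [card_succ _ _ (by simp), W, ← ih, ← ih, ← ih, ← ih, S18,
        Finset.sum_insert (by decide), Finset.sum_insert (by decide),
        Finset.sum_insert (by decide), Finset.sum_singleton]
      simp only [Prod.mk_sub_mk, ← add_assoc]
      push_cast
      rw [show (a : ℤ) + 1 - 1 - 1 = a - 1 by ring, show (a : ℤ) + 1 - 1 - -2 = a + 3 - 1 by ring,
        show (b : ℤ) + 1 - 1 - 0 = b + 1 - 1 by ring, show (b : ℤ) + 1 - 1 - -1 = b + 2 - 1 by ring,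
        show (b : ℤ) + 1 - 1 - 1 = b - 1 by ring]

lemma W_eq_zero (n : ℕ) : ∀ a b : ℕ, (¬ ∃ m : ℕ, n + 4 = a + 3 * b + 3 * m) → W n a b = 0 := by
  induction n with
  | zero =>
    intro a b h
    rw [W, if_neg]
    rintro ⟨rfl, rfl⟩
    exact h ⟨0, rfl⟩
  | succ n ih =>
    intro a b h
    match a, b with
    | 0, b => rw [W]
    | a + 1, 0 => rw [W]
    | a + 1, b + 1 =>
      rw [W, ih, ih, ih, ih]
      · rintro ⟨m, hm⟩
        exact h ⟨m + 1, by omega⟩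
      · rintro ⟨m, hm⟩
        exact h ⟨m, by omega⟩
      · rintro ⟨m, hm⟩
        exact h ⟨m + 1, by omega⟩
      · rintro ⟨m, hm⟩
        exact h ⟨m, by omega⟩

/-- The closed form in shifted coordinates. It is stated over `ℚ` because the factors
`a + 2 * b - 1` and `2 * a + 3 * b - 1` are negative at `a = b = 0`. -/
lemma W_formula (n : ℕ) : ∀ a b m : ℕ, n + 4 = a + 3 * b + 3 * m →
    (W n a b : ℚ) * m.factorial * (m + b).factorial * (2 * m + a + 2 * b).factorial *
        (2 * m + a + 3 * b).factorial =
      a * b * (a + 3 * b) * ((a + 2 * b - 1) * (a + 2 * b) + m * (2 * a + 3 * b - 1)) *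
        n.factorial * (n + 3).factorial := by
  induction n with
  | zero =>
    intro a b m h
    have ha : a ≤ 4 := by omega
    have hb : b ≤ 1 := by omega
    have hm : m ≤ 1 := by omega
    interval_cases b <;> interval_cases a <;> interval_cases m <;>
      first | omega | norm_num [W, Nat.factorial]
  | succ n ih =>
    intro a b m h
    match a, b with
    | 0, b => simp [W]
    | a + 1, 0 => simp [W]
    | a + 1, b + 1 =>
      have hn : (n : ℚ) = a + 3 * b + 3 * m - 1 := by
        have : (n : ℚ) + 1 + 4 = a + 1 + 3 * (b + 1) + 3 * m := by exact_mod_cast h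
        linarith
      have h1 := ih a (b + 1) m (by omega)
      have h3 := ih (a + 3) b m (by omega)
      have hnf : ((n + 1).factorial : ℚ) = (n + 1) * n.factorial := by
        exact_mod_cast Nat.factorial_succ n
      have hnf3 : ((n + 1 + 3).factorial : ℚ) = (n + 4) * (n + 3).factorial := by
        exact_mod_cast Nat.factorial_succ (n + 3)
      -- `e2`, `e3`, `e4` and, for `m + 1`, `e1` reduce the factorials in the four predecessor
      -- terms and in the goal to four common ones; the rest is linear in the induction hypotheses.
      have e2 : ((m + (b + 1)).factorial : ℚ) = (m + b + 1) * (m + b).factorial := by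
        exact_mod_cast Nat.factorial_succ (m + b)
      have e3 : ((2 * m + (a + 1) + 2 * (b + 1)).factorial : ℚ) =
          (2 * m + a + 2 * b + 3) * (2 * m + a + 2 * (b + 1)).factorial := by
        have := Nat.factorial_succ (2 * m + a + 2 * (b + 1))
        rw [show 2 * m + (a + 1) + 2 * (b + 1) = 2 * m + a + 2 * (b + 1) + 1 by ring, this]
        push_cast
        ring
      have e4 : ((2 * m + (a + 1) + 3 * (b + 1)).factorial : ℚ) =
          (2 * m + a + 3 * b + 4) * (2 * m + a + 3 * (b + 1)).factorial := by
        have := Nat.factorial_succ (2 * m + a + 3 * (b + 1))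
        rw [show 2 * m + (a + 1) + 3 * (b + 1) = 2 * m + a + 3 * (b + 1) + 1 by ring, this]
        push_cast
        ring
      rw [show 2 * m + (a + 3) + 2 * b = 2 * m + (a + 1) + 2 * (b + 1) by ring,
        show 2 * m + (a + 3) + 3 * b = 2 * m + a + 3 * (b + 1) by ring, e3] at h3
      rw [e2] at h1
      rw [hnf, hnf3, e2, e3, e4]
      match m with
      | 0 =>
        have z2 : W n a (b + 2) = 0 := W_eq_zero n _ _ (by rintro ⟨m, hm⟩; omega)
        have z4 : W n (a + 3) (b + 1) = 0 := W_eq_zero n _ _ (by rintro ⟨m, hm⟩; omega)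
        rw [W, z2, z4]
        push_cast at h1 h3 hn ⊢
        rw [hn]
        linear_combination (2 * 0 + a + 2 * b + 3) * (2 * 0 + a + 3 * b + 4) * h1 +
          ((0 : ℚ) + b + 1) * (2 * 0 + a + 3 * b + 4) * h3
      | m + 1 =>
        have h2 := ih a (b + 2) m (by omega)
        have h4 := ih (a + 3) (b + 1) m (by omega)
        have e1 : ((m + 1).factorial : ℚ) = (m + 1) * m.factorial := by
          exact_mod_cast Nat.factorial_succ m
        rw [show m + (b + 2) = m + 1 + (b + 1) by ring, e2,
          show 2 * m + a + 2 * (b + 2) = 2 * (m + 1) + a + 2 * (b + 1) by ring,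
          show 2 * m + a + 3 * (b + 2) = 2 * (m + 1) + (a + 1) + 3 * (b + 1) by ring, e4] at h2
        rw [show m + (b + 1) = m + 1 + b by ring,
          show 2 * m + (a + 3) + 2 * (b + 1) = 2 * (m + 1) + (a + 1) + 2 * (b + 1) by ring, e3,
          show 2 * m + (a + 3) + 3 * (b + 1) = 2 * (m + 1) + (a + 1) + 3 * (b + 1) by ring,
          e4] at h4
        rw [e1] at h1 h3 ⊢
        rw [W]
        generalize ((m + 1 + b).factorial : ℚ) = x2 at *
        generalize ((2 * (m + 1) + a + 2 * (b + 1)).factorial : ℚ) = x3 at *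
        generalize ((2 * (m + 1) + a + 3 * (b + 1)).factorial : ℚ) = x4 at *
        generalize (m.factorial : ℚ) = x1 at *
        push_cast at h1 h2 h3 h4 hn ⊢
        rw [hn]
        linear_combination
          ((2 * (m + 1) + a + 2 * b + 3) * (2 * (m + 1) + a + 3 * b + 4) : ℚ) * h1 +
          ((m + 1) * (2 * (m + 1) + a + 2 * b + 3) : ℚ) * h2 +
          ((m + 1 + b + 1) * (2 * (m + 1) + a + 3 * b + 4) : ℚ) * h3 +
          ((m + 1) * (m + 1 + b + 1) : ℚ) * h4

lemma quadWalks_eq_W (i j n : ℕ) : quadWalks S18 i j n = W n (i + 1) (j + 1) := by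
  rw [← card_eq_W]
  simp only [Nat.cast_add, Nat.cast_one, add_sub_cancel_right]
  rfl

/-- Hypergeometric formula for the model `{(1,0),(1,−1),(−2,1),(−2,0)}`:
`q(i,j;n)` vanishes unless `n = i+3j+3m`, in which case
`q(i,j;n) = (i+1)(j+1)(i+3j+4)((i+2j+2)(i+2j+3)+m(2i+3j+4))n!(n+3)! /
(m!(m+j+1)!(2m+i+2j+3)!(2m+i+3j+4)!)`. -/
theorem stmt18 (i j n : ℕ) :
    ((¬ ∃ m : ℕ, n = i + 3 * j + 3 * m) → quadWalks S18 i j n = 0) ∧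
    ∀ m : ℕ, n = i + 3 * j + 3 * m →
      quadWalks S18 i j n * m.factorial * (m + j + 1).factorial *
          (2 * m + i + 2 * j + 3).factorial * (2 * m + i + 3 * j + 4).factorial =
        (i + 1) * (j + 1) * (i + 3 * j + 4) *
          ((i + 2 * j + 2) * (i + 2 * j + 3) + m * (2 * i + 3 * j + 4)) *
          n.factorial * (n + 3).factorial := by
  rw [quadWalks_eq_W]
  refine ⟨fun h => W_eq_zero _ _ _ ?_, fun m hm => ?_⟩
  · rintro ⟨m, hm⟩
    exact h ⟨m, by omega⟩
  · have h := W_formula n (i + 1) (j + 1) m (by omega)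
    rw [show m + (j + 1) = m + j + 1 by ring,
      show 2 * m + (i + 1) + 2 * (j + 1) = 2 * m + i + 2 * j + 3 by ring,
      show 2 * m + (i + 1) + 3 * (j + 1) = 2 * m + i + 3 * j + 4 by ring] at h
    push_cast at h
    rw [← Nat.cast_inj (R := ℚ)]
    push_cast
    rw [h]
    ring
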